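/- For all natural numbers n, q and k, the number of odd iterates is translation-invariant modulo 2^k: k₂(n + 2^k · q, k) = k₂(n, k), where k₂(n,k) is the number of indices j with 0 ≤ j < k such that T^j(n) is odd. -/

import Mathlib

/-! The numbers `n` and `n + 2 * a` have the same parity, so `T` turns a translation by `2 * a` into one
by `a` or `3 * a`. Hence `T^[j] (n + 2 ^ k * q)` and `T^[j] n` differ by a multiple of `2 ^ (k - j)`
(`T_iterate_add`), so for `j < k` they have the same parity and the two counts agree. -/

/-- The 3x+1 map: T(n) = n/2 if n is even, (3n+1)/2 if n is odd. -/
def T (n : ℕ) : ℕ := if n % 2 = 0 then n / 2 else (3 * n + 1) / 2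

/-- k₂(n,k): the number of indices j < k such that T^j(n) is odd. -/
def k2 (n k : ℕ) : ℕ := ((Finset.range k).filter fun j => Odd (T^[j] n)).card

/-- One step of `T` costs one factor of 2 in the period: the translation `2 * a` becomes `a` or
`3 * a`, according to the parity of `n`. -/
theorem T_add_two_mul (n a : ℕ) :
    T (n + 2 * a) = T n + (if n % 2 = 0 then 1 else 3) * a := by
  unfold T
  split_ifs <;> omega

/-- After `j` steps, starting points congruent modulo `2 ^ (j + m)` still agree
modulo `2 ^ m`. -/
theorem T_iterate_add (j m : ℕ) : ∀ n q : ℕ,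
    ∃ r, T^[j] (n + 2 ^ (j + m) * q) = T^[j] n + 2 ^ m * r := by
  induction j with
  | zero => exact fun n q => ⟨q, by simp⟩
  | succ j ih =>
    intro n q
    obtain ⟨r, hr⟩ := ih (T n) ((if n % 2 = 0 then 1 else 3) * q)
    refine ⟨r, ?_⟩
    rw [Function.iterate_succ_apply, Function.iterate_succ_apply, ← hr,
      show n + 2 ^ (j + 1 + m) * q = n + 2 * (2 ^ (j + m) * q) by ring, T_add_two_mul,
      mul_left_comm]

/-- k₂ is translation-invariant modulo 2^k: k₂(n + 2^k·q, k) = k₂(n, k). -/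
theorem k2_translation_invariant (n q k : ℕ) :
    k2 (n + 2 ^ k * q) k = k2 n k := by
  unfold k2
  congr 1
  refine Finset.filter_congr fun j hj => ?_
  -- As `j < k`, at least one factor of 2 survives the first `j` steps.
  obtain ⟨m, rfl⟩ : ∃ m, k = j + (m + 1) :=
    ⟨k - j - 1, by have := Finset.mem_range.mp hj; omega⟩
  obtain ⟨r, hr⟩ := T_iterate_add j (m + 1) n q
  rw [hr, pow_succ', mul_assoc, Nat.odd_iff, Nat.odd_iff, Nat.add_mul_mod_self_left]
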